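/- Let α > −1 and β > −1 be real numbers and for m = 1, 2, … define b_m := (m+1)·(β+m+1)·(m+α+2)^{m+α+3/2}·(m+α+β+2)^{m+α+β+3/2} / ( (m+2)^{m+3/2}·(m+β+2)^{m+β+3/2} ). Then the ratio b_m / ( e^{2α}·m^{2α+2} ) tends to 1 as m → ∞. -/

import Mathlib

open Real Filter

open Asymptotics Topology

/-!
Each power satisfies `(x + c) ^ (x + d) ~ e ^ c * x ^ (x + d)`, because
`(1 + c / x) ^ (x + d) → e ^ c`. In the quotient the constants combine to
`e ^ ((α + 2) + (α + β + 2) - 2 - (β + 2)) = e ^ (2 * α)`. Likewise the exponents of the powers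
of `x` add up to `2 * α`, and the two linear factors contribute the remaining `x ^ 2`.
-/

lemma isEquivalent_add_const_atTop (c : ℝ) : (fun x : ℝ => x + c) ~[atTop] fun x => x :=
  IsEquivalent.refl.add_const_of_norm_tendsto_atTop tendsto_norm_atTop_atTop

lemma tendsto_one_add_div_rpow_add_exp (c d : ℝ) :
    Tendsto (fun x : ℝ => (1 + c / x) ^ (x + d)) atTop (𝓝 (exp c)) := by
  have base_tendsto_one : Tendsto (fun x : ℝ => 1 + c / x) atTop (𝓝 1) := by
    simpa using (tendsto_id.const_div_atTop c).const_add 1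
  have fixed_power_tendsto_one : Tendsto (fun x : ℝ => (1 + c / x) ^ d) atTop (𝓝 1) := by
    simpa using base_tendsto_one.rpow_const (p := d) (.inl one_ne_zero)
  have product_tendsto := (tendsto_one_add_div_rpow_exp c).mul fixed_power_tendsto_one
  rw [mul_one] at product_tendsto
  refine product_tendsto.congr' ?_
  filter_upwards [base_tendsto_one.eventually_const_lt one_pos] with x base_pos
  exact (rpow_add base_pos x d).symm

lemma isEquivalent_add_const_rpow_add_const (c d : ℝ) :
    (fun x : ℝ => (x + c) ^ (x + d)) ~[atTop] fun x => exp c * x ^ (x + d) := by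
  have factored : (fun x : ℝ => (1 + c / x) ^ (x + d) * x ^ (x + d)) ~[atTop]
      fun x => exp c * x ^ (x + d) :=
    ((isEquivalent_const_iff_tendsto (exp_ne_zero c)).2
      (tendsto_one_add_div_rpow_add_exp c d)).mul .refl
  refine factored.congr_left ?_
  filter_upwards [eventually_gt_atTop 0, eventually_ge_atTop (-c)] with x x_pos neg_c_le
  have base_eq : 1 + c / x = (x + c) / x := by field_simp
  have base_nonneg : 0 ≤ (x + c) / x := div_nonneg (neg_le_iff_add_nonneg.1 neg_c_le) x_pos.le
  rw [base_eq, ← mul_rpow base_nonneg x_pos.le, div_mul_cancel₀ _ x_pos.ne']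

lemma leading_terms_quotient_eq (α β : ℝ) {x : ℝ} (x_pos : 0 < x) :
    x * x * (exp (α + 2) * x ^ (x + α + 3 / 2)) *
        (exp (α + β + 2) * x ^ (x + α + β + 3 / 2)) /
        ((exp 2 * x ^ (x + 3 / 2)) * (exp (β + 2) * x ^ (x + β + 3 / 2))) =
      exp (2 * α) * x ^ (2 * α + 2) := by
  have sq_eq_exp : x * x = exp (2 * log x) := by rw [two_mul, exp_add, exp_log x_pos]
  simp only [sq_eq_exp, rpow_def_of_pos x_pos, ← exp_add, ← exp_sub]
  congr 1
  ring

theorem bm_strong_equivalence_general (α β : ℝ) :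
    Tendsto
      (fun x : ℝ =>
        (x + 1) * (β + x + 1) * (x + α + 2) ^ (x + α + 3 / 2) *
            (x + α + β + 2) ^ (x + α + β + 3 / 2) /
            ((x + 2) ^ (x + 3 / 2) * (x + β + 2) ^ (x + β + 3 / 2)) /
          (exp (2 * α) * x ^ (2 * α + 2)))
      atTop (𝓝 1) := by
  have linear_β : (fun x : ℝ => β + x + 1) ~[atTop] fun x => x := by
    simpa only [add_comm β, add_assoc] using isEquivalent_add_const_atTop (β + 1)
  have power_α : (fun x : ℝ => (x + α + 2) ^ (x + α + 3 / 2)) ~[atTop]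
      fun x => exp (α + 2) * x ^ (x + α + 3 / 2) := by
    simpa only [add_assoc] using isEquivalent_add_const_rpow_add_const (α + 2) (α + 3 / 2)
  have power_αβ : (fun x : ℝ => (x + α + β + 2) ^ (x + α + β + 3 / 2)) ~[atTop]
      fun x => exp (α + β + 2) * x ^ (x + α + β + 3 / 2) := by
    simpa only [add_assoc] using
      isEquivalent_add_const_rpow_add_const (α + β + 2) (α + β + 3 / 2)
  have power_β : (fun x : ℝ => (x + β + 2) ^ (x + β + 3 / 2)) ~[atTop]
      fun x => exp (β + 2) * x ^ (x + β + 3 / 2) := by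
    simpa only [add_assoc] using isEquivalent_add_const_rpow_add_const (β + 2) (β + 3 / 2)
  have quotient_equiv :=
    ((((isEquivalent_add_const_atTop 1).mul linear_β).mul power_α).mul power_αβ).div
      ((isEquivalent_add_const_rpow_add_const 2 (3 / 2)).mul power_β)
  refine (isEquivalent_iff_tendsto_one ?_).1 (quotient_equiv.congr_right ?_)
  · filter_upwards [eventually_gt_atTop 0] with x x_pos
    positivity
  · filter_upwards [eventually_gt_atTop 0] with x x_pos
    exact leading_terms_quotient_eq α β x_pos

theorem bm_strong_equivalence (α β : ℝ) (hα : -1 < α) (hβ : -1 < β)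
    (b : ℕ → ℝ)
    (hb : ∀ m : ℕ, 1 ≤ m → b m =
      ((m : ℝ) + 1) * (β + (m : ℝ) + 1) *
        ((m : ℝ) + α + 2) ^ ((m : ℝ) + α + 3 / 2) *
        ((m : ℝ) + α + β + 2) ^ ((m : ℝ) + α + β + 3 / 2) /
        (((m : ℝ) + 2) ^ ((m : ℝ) + 3 / 2) * ((m : ℝ) + β + 2) ^ ((m : ℝ) + β + 3 / 2))) :
    Filter.Tendsto
      (fun m : ℕ => b m / (Real.exp (2 * α) * (m : ℝ) ^ (2 * α + 2)))
      Filter.atTop (nhds 1) := by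
  refine ((bm_strong_equivalence_general α β).comp tendsto_natCast_atTop_atTop).congr' ?_
  filter_upwards [eventually_ge_atTop 1] with m hm
  rw [hb m hm, Function.comp_apply]
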